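/- Suppose the extended relativistic Toda lattice equations hold: for all n ≥ 1 and all t, α_n'(t) = p·α_n(t)·(α_{n−1}(t) + γ_{n−1}(t) − α_n(t) − γ_n(t)) + q·α_n(t)·( 1/(γ_{n−1}(t) − α_n(t)) − 1/(γ_n(t) − α_{n+1}(t)) ) and γ_n'(t) = p·( α_n(t)·γ_n(t) − α_{n+1}(t)·γ_{n+1}(t) ) + q·( α_{n+1}(t)/(γ_n(t) − α_{n+1}(t)) − α_n(t)/(γ_{n−1}(t) − α_n(t)) ). Then the infinite Lax pair representation dH/dt = H·F − F·H holds entrywise: for all indices i, j ≥ 1 and all t, the derivative of the (i,j) entry of H(t) equals (H(t)F(t))_{ij} − (F(t)H(t))_{ij}, where (HF)_{ij} = H_{i,j−1}F_{j−1,j} + H_{i,j}F_{j,j} + H_{i,j+1}F_{j+1,j} and (FH)_{ij} = F_{i,i−1}H_{i−1,j} + F_{i,i}H_{i,j} + F_{i,i+1}H_{i+1,j} (all other terms vanish since F is tridiagonal). -/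

import Mathlib

/-!
The matrix `H` depends linearly on `(α, γ)`, so the Lax equation is the algebraic identity that
`H F - F H` is the matrix `H` built from the right-hand sides of the lattice equations.
Multiplying by `F` on the right combines adjacent columns, and on the left takes differences of
adjacent rows. Rows of `H` agree above the diagonal, so that strictly above it only the column
combinations survive; the identity `γ_n / (γ_n - α_{n+1}) = 1 + α_{n+1} / (γ_n - α_{n+1})` turns
their `q`-part into that of the equation for `γ`.
-/

namespace RelativisticToda

section Definitions

variable {K : Type*}

/-- The Hessenberg matrix `H` whose column `j` is constantly `c j` down to the diagonal and whose
subdiagonal entry in row `i` is `a i`. Row and column `0` of the matrix are a boundary layer around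
the positive indices of the paper. -/
def hessenberg [Zero K] (a c : ℕ → K) : Matrix ℕ ℕ K :=
  .of fun i j => if i ≤ j then c j else if j + 1 = i then a i else 0

/-- The tridiagonal matrix `F` of the Lax pair, at a fixed time. -/
def laxTridiagonal [Field K] (p q : K) (a c : ℕ → K) : Matrix ℕ ℕ K :=
  .of fun i j =>
    if i = j then p * a i + q / (c i - a (i + 1))
    else if i + 1 = j then -(q / (c i - a (i + 1)))
    else if j + 1 = i then -(p * a i)
    else 0

/-- The right-hand side of the extended relativistic Toda equation for `α n`, where `1 ≤ n`. -/
def alphaFlow [Field K] (p q : K) (a c : ℕ → K) (n : ℕ) : K :=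
  p * a n * (a (n - 1) + c (n - 1) - a n - c n) +
    q * a n * (1 / (c (n - 1) - a n) - 1 / (c n - a (n + 1)))

/-- The right-hand side of the extended relativistic Toda equation for `γ n`, where `1 ≤ n`. -/
def gammaFlow [Field K] (p q : K) (a c : ℕ → K) (n : ℕ) : K :=
  p * (a n * c n - a (n + 1) * c (n + 1)) +
    q * (a (n + 1) / (c n - a (n + 1)) - a n / (c (n - 1) - a n))

/-- The `(i, j)` entry of `M * F` for infinite matrices with `F` tridiagonal, where `1 ≤ j`: the
infinite sum reduces to the three terms in which `F` may be nonzero. -/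
def mulTridiagonal [Mul K] [Add K] (M F : Matrix ℕ ℕ K) (i j : ℕ) : K :=
  M i (j - 1) * F (j - 1) j + M i j * F j j + M i (j + 1) * F (j + 1) j

/-- The `(i, j)` entry of `F * M` for infinite matrices with `F` tridiagonal, where `1 ≤ i`; see
`mulTridiagonal`. -/
def tridiagonalMul [Mul K] [Add K] (F M : Matrix ℕ ℕ K) (i j : ℕ) : K :=
  F i (i - 1) * M (i - 1) j + F i i * M i j + F i (i + 1) * M (i + 1) j

end Definitions

section HessenbergEntries

variable {K : Type*} [Zero K] (a c : ℕ → K) {i j : ℕ}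

lemma hessenberg_of_le (h : i ≤ j) : hessenberg a c i j = c j :=
  if_pos h

lemma hessenberg_succ_self (j : ℕ) : hessenberg a c (j + 1) j = a (j + 1) := by
  simp [hessenberg]

lemma hessenberg_of_succ_lt (h : j + 1 < i) : hessenberg a c i j = 0 := by
  simp [hessenberg, h.ne, show ¬i ≤ j by lia]

end HessenbergEntries

section Commutator

variable {K : Type*} [Field K] (p q : K) (a c : ℕ → K) {i j : ℕ}

lemma laxTridiagonal_self (k : ℕ) :
    laxTridiagonal p q a c k k = p * a k + q / (c k - a (k + 1)) :=
  if_pos rfl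

lemma laxTridiagonal_self_succ (k : ℕ) :
    laxTridiagonal p q a c k (k + 1) = -(q / (c k - a (k + 1))) := by
  simp [laxTridiagonal]

lemma laxTridiagonal_succ_self (k : ℕ) :
    laxTridiagonal p q a c (k + 1) k = -(p * a (k + 1)) := by
  simp [laxTridiagonal, show k + 1 + 1 ≠ k by lia]

lemma mulTridiagonal_laxTridiagonal (M : Matrix ℕ ℕ K) (i j : ℕ) :
    mulTridiagonal M (laxTridiagonal p q a c) i (j + 1) =
      p * (a (j + 1) * M i (j + 1) - a (j + 2) * M i (j + 2)) +
        q * (M i (j + 1) / (c (j + 1) - a (j + 2)) - M i j / (c j - a (j + 1))) := by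
  simp only [mulTridiagonal, Nat.add_sub_cancel, laxTridiagonal_self, laxTridiagonal_self_succ,
    laxTridiagonal_succ_self]
  ring

lemma laxTridiagonal_tridiagonalMul (M : Matrix ℕ ℕ K) (i j : ℕ) :
    tridiagonalMul (laxTridiagonal p q a c) M (i + 1) j =
      p * a (i + 1) * (M (i + 1) j - M i j) +
        q * (M (i + 1) j - M (i + 2) j) / (c (i + 1) - a (i + 2)) := by
  simp only [tridiagonalMul, Nat.add_sub_cancel, laxTridiagonal_self, laxTridiagonal_self_succ,
    laxTridiagonal_succ_self]
  ring

/-- The `(i, j)` entry of `H F - F H`, where `1 ≤ i` and `1 ≤ j`. -/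
def laxCommutator (i j : ℕ) : K :=
  mulTridiagonal (hessenberg a c) (laxTridiagonal p q a c) i j -
    tridiagonalMul (laxTridiagonal p q a c) (hessenberg a c) i j

lemma laxCommutator_of_lt (hne : ∀ n, c n - a (n + 1) ≠ 0) (h : i < j) :
    laxCommutator p q a c (i + 1) (j + 1) = gammaFlow p q a c (j + 1) := by
  have div_gap (n : ℕ) : c n / (c n - a (n + 1)) = 1 + a (n + 1) / (c n - a (n + 1)) := by
    rw [one_add_div (hne n), sub_add_cancel]
  rw [laxCommutator, mulTridiagonal_laxTridiagonal, laxTridiagonal_tridiagonalMul]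
  simp (disch := lia) only [hessenberg_of_le, div_gap]
  rw [gammaFlow, Nat.add_sub_cancel]
  ring

lemma laxCommutator_self (i : ℕ) :
    laxCommutator p q a c (i + 1) (i + 1) = gammaFlow p q a c (i + 1) := by
  rw [laxCommutator, mulTridiagonal_laxTridiagonal, laxTridiagonal_tridiagonalMul]
  simp (disch := lia) only [hessenberg_of_le, hessenberg_succ_self]
  rw [gammaFlow, Nat.add_sub_cancel]
  ring

lemma laxCommutator_succ_self (j : ℕ) :
    laxCommutator p q a c (j + 2) (j + 1) = alphaFlow p q a c (j + 2) := by
  rw [laxCommutator, mulTridiagonal_laxTridiagonal, laxTridiagonal_tridiagonalMul]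
  simp (disch := lia) only [hessenberg_of_le, hessenberg_succ_self, hessenberg_of_succ_lt]
  rw [alphaFlow, show j + 2 - 1 = j + 1 from rfl]
  ring

lemma laxCommutator_of_succ_lt (h : j + 1 < i) :
    laxCommutator p q a c (i + 1) (j + 1) = 0 := by
  have shift : a (j + 2) * hessenberg a c (i + 1) (j + 2) =
      a (i + 1) * hessenberg a c i (j + 1) := by
    obtain rfl | h' : i = j + 2 ∨ j + 2 < i := by lia
    · rw [hessenberg_succ_self, hessenberg_succ_self, mul_comm]
    · rw [hessenberg_of_succ_lt a c (by lia), hessenberg_of_succ_lt a c h', mul_zero, mul_zero]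
  rw [laxCommutator, mulTridiagonal_laxTridiagonal, laxTridiagonal_tridiagonalMul]
  simp (disch := lia) only [hessenberg_of_succ_lt]
  linear_combination -p * shift

theorem laxCommutator_eq_hessenberg_flow (hne : ∀ n, c n - a (n + 1) ≠ 0)
    (hi : 1 ≤ i) (hj : 1 ≤ j) :
    laxCommutator p q a c i j = hessenberg (alphaFlow p q a c) (gammaFlow p q a c) i j := by
  obtain ⟨i, rfl⟩ := Nat.exists_eq_add_of_le' hi
  obtain ⟨j, rfl⟩ := Nat.exists_eq_add_of_le' hj
  obtain h | rfl | rfl | h : i < j ∨ i = j ∨ i = j + 1 ∨ j + 1 < i := by lia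
  · rw [laxCommutator_of_lt p q a c hne h, hessenberg_of_le _ _ (by lia)]
  · rw [laxCommutator_self, hessenberg_of_le _ _ le_rfl]
  · rw [laxCommutator_succ_self, hessenberg_succ_self]
  · rw [laxCommutator_of_succ_lt p q a c h, hessenberg_of_succ_lt _ _ (by lia)]

end Commutator

lemma hasDerivAt_hessenberg {𝕜 E : Type*} [NontriviallyNormedField 𝕜] [NormedAddCommGroup E]
    [NormedSpace 𝕜 E] {α γ : ℕ → 𝕜 → E} {a' c' : ℕ → E} {t : 𝕜} {i j : ℕ}
    (hα : HasDerivAt (α i) (a' i) t) (hγ : HasDerivAt (γ j) (c' j) t) :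
    HasDerivAt (fun s => hessenberg (α · s) (γ · s) i j) (hessenberg a' c' i j) t := by
  simp only [hessenberg, Matrix.of_apply]
  split_ifs
  exacts [hγ, hα, hasDerivAt_const t 0]

end RelativisticToda

open RelativisticToda

theorem stmt_3_general {𝕜 K : Type*} [NontriviallyNormedField 𝕜] [NormedField K]
    [NormedSpace 𝕜 K] (p q : K) {α γ : ℕ → 𝕜 → K} {t : 𝕜}
    (hne : ∀ n, γ n t - α (n + 1) t ≠ 0)
    (hα : ∀ n, 1 ≤ n → HasDerivAt (α n) (alphaFlow p q (α · t) (γ · t) n) t)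
    (hγ : ∀ n, 1 ≤ n → HasDerivAt (γ n) (gammaFlow p q (α · t) (γ · t) n) t)
    {i j : ℕ} (hi : 1 ≤ i) (hj : 1 ≤ j) :
    HasDerivAt (fun s => hessenberg (α · s) (γ · s) i j)
      (laxCommutator p q (α · t) (γ · t) i j) t := by
  rw [laxCommutator_eq_hessenberg_flow p q _ _ hne hi hj]
  exact hasDerivAt_hessenberg (hα i hi) (hγ j hj)

theorem stmt_3 (p q : ℂ) (α γ : ℕ → ℝ → ℂ)
    (hαdiff : ∀ n, Differentiable ℝ (α n))
    (hγdiff : ∀ n, Differentiable ℝ (γ n))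
    (hα0 : ∀ t, α 0 t = -1) (hα1 : ∀ t, α 1 t = 0) (hγ0 : ∀ t, γ 0 t = 1)
    (hne : ∀ n t, γ n t - α (n + 1) t ≠ 0)
    (hαeq : ∀ n, 1 ≤ n → ∀ t, deriv (α n) t =
      p * α n t * (α (n - 1) t + γ (n - 1) t - α n t - γ n t) +
        q * α n t *
          (1 / (γ (n - 1) t - α n t) - 1 / (γ n t - α (n + 1) t)))
    (hγeq : ∀ n, 1 ≤ n → ∀ t, deriv (γ n) t =
      p * (α n t * γ n t - α (n + 1) t * γ (n + 1) t) +
        q * (α (n + 1) t / (γ n t - α (n + 1) t) - α n t / (γ (n - 1) t - α n t)))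
    (H F : ℕ → ℕ → ℝ → ℂ)
    (hH : ∀ i j t, H i j t = if i ≤ j then γ j t else if j + 1 = i then α i t else 0)
    (hF : ∀ i j t, F i j t =
      if i = j then p * α i t + q / (γ i t - α (i + 1) t)
      else if i + 1 = j then -(q / (γ i t - α (i + 1) t))
      else if j + 1 = i then -(p * α i t)
      else 0) :
    ∀ i j, 1 ≤ i → 1 ≤ j → ∀ t : ℝ,
      deriv (H i j) t =
        (H i (j - 1) t * F (j - 1) j t + H i j t * F j j t + H i (j + 1) t * F (j + 1) j t) -
          (F i (i - 1) t * H (i - 1) j t + F i i t * H i j t + F i (i + 1) t * H (i + 1) j t) := by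
  intro i j hi hj t
  obtain rfl : H = fun i j s => hessenberg (α · s) (γ · s) i j := by
    funext i j s
    exact hH i j s
  obtain rfl : F = fun i j s => laxTridiagonal p q (α · s) (γ · s) i j := by
    funext i j s
    exact hF i j s
  exact (stmt_3_general p q (hne · t)
    (fun n hn => (hαdiff n t).hasDerivAt.congr_deriv (hαeq n hn t))
    (fun n hn => (hγdiff n t).hasDerivAt.congr_deriv (hγeq n hn t)) hi hj).deriv
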